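/- Fix integers ℓ≥1 and n≥0. Then Σ_{σ ∈ G_{ℓ,n}} q^{fmaf σ} x^{fix σ} = Σ_{k=0}^n x^{n−k} · [n choose k]_{q^ℓ} · d_{ℓ,k}(q), where d_{ℓ,k}(q) = Σ_{π ∈ D_{ℓ,k}} q^{fmaj π}. -/

import Mathlib

/-!
A colored permutation is determined by its set `T` of fixed points and its derangement part `π`,
and every pair `(T, π)` occurs: fixed points may be inserted anywhere, being positions and values
at the same time. Under this correspondence `col σ = col π` and `maf σ = maj π + w(T)`, where the
displacement `w(T)` depends on `T` alone. Summing over `π` leaves `Σ q^{ℓ w(T)}` over the sets `T`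
of a given size `n - k`, and this is `[n choose k]_{q^ℓ}`.
-/

open Finset

/-- A colored permutation in `G_{ℓ,n} ≅ C_ℓ ≀ S_n`: an underlying permutation of `Fin n`
together with a color (exponent of `ζ`) attached to each position. The letter at (0-based)
position `i` of the word of `σ` is `ζ^(σ.2 i) · (σ.1 i + 1)` (1-based value `σ.1 i + 1`). -/
abbrev CP (ℓ n : ℕ) := Equiv.Perm (Fin n) × (Fin n → Fin ℓ)

namespace CP

variable {ℓ n : ℕ}

/-- `gtLetter a b` : the letter `a = (colorIndex, value)` is greater than `b` in the order
`1 > ζ > ⋯ > ζ^{ℓ-1}` on colors, colors compared first. -/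
def gtLetter (a b : ℕ × ℕ) : Prop := a.1 < b.1 ∨ (a.1 = b.1 ∧ b.2 < a.2)

instance (a b : ℕ × ℕ) : Decidable (gtLetter a b) := by unfold gtLetter; infer_instance

/-- The letter (color index, 0-based absolute value) at 0-based position `i`. -/
def letter (σ : CP ℓ n) (i : ℕ) : ℕ × ℕ :=
  if h : i < n then ((σ.2 ⟨i, h⟩ : ℕ), (σ.1 ⟨i, h⟩ : ℕ)) else (0, 0)

/-- 0-based descent positions : `i < n-1` such that `x_{i+1} > x_{i+2}` (1-based positions). -/
def desSet (σ : CP ℓ n) : Finset ℕ :=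
  (range (n - 1)).filter fun i => gtLetter (letter σ i) (letter σ (i + 1))

/-- Major index: sum of the (1-based) descent places. -/
def maj (σ : CP ℓ n) : ℕ := ∑ i ∈ desSet σ, (i + 1)

/-- Number of descents. -/
def des (σ : CP ℓ n) : ℕ := (desSet σ).card

/-- `col σ = Σ_j j·#{i : ε_{x_i} = ζ^j}`. -/
def col (σ : CP ℓ n) : ℕ := ∑ i, (σ.2 i : ℕ)

/-- flag major index. -/
def fmaj (σ : CP ℓ n) : ℕ := ℓ * maj σ + col σ

/-- The set of fixed points (position fixed and color `ζ^0 = 1`). -/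
def fixSet (σ : CP ℓ n) : Finset (Fin n) :=
  univ.filter fun i => σ.1 i = i ∧ (σ.2 i : ℕ) = 0

def fix (σ : CP ℓ n) : ℕ := (fixSet σ).card

/-- Number of excedances `x_i > i`. -/
def exc (σ : CP ℓ n) : ℕ :=
  (univ.filter fun i : Fin n => (σ.2 i : ℕ) = 0 ∧ (i : ℕ) < (σ.1 i : ℕ)).card

lemma card_nonfix (σ : CP ℓ n) : ((fixSet σ)ᶜ).card = n - fix σ := by
  rw [Finset.card_compl, fix, Fintype.card_fin]

lemma card_vals (σ : CP ℓ n) : (((fixSet σ)ᶜ).image σ.1).card = n - fix σ := by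
  rw [Finset.card_image_of_injective _ σ.1.injective, card_nonfix]

/-- The bijection from nonfixed positions to the set of their values. -/
def derMid (σ : CP ℓ n) :
    {x // x ∈ ((fixSet σ)ᶜ : Finset (Fin n))} ≃ {x // x ∈ ((fixSet σ)ᶜ).image σ.1} where
  toFun p := ⟨σ.1 p.1, Finset.mem_image_of_mem _ p.2⟩
  invFun v := ⟨σ.1.symm v.1, by
    obtain ⟨p, hp, hpv⟩ := Finset.mem_image.mp v.2
    simpa [← hpv] using hp⟩
  left_inv p := by simp
  right_inv v := by simp

/-- The derangement part `Der σ`: delete the fixed points of the word of `σ`, replace each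
absolute value by its rank among the remaining values, and keep the colors. -/
def Der (σ : CP ℓ n) : CP ℓ (n - fix σ) :=
  let eP := ((fixSet σ)ᶜ).orderIsoOfFin (card_nonfix σ)
  let eV := (((fixSet σ)ᶜ).image σ.1).orderIsoOfFin (card_vals σ)
  (eP.toEquiv.trans ((derMid σ).trans eV.toEquiv.symm), fun i => σ.2 (eP i))

/-- `maf σ = maj (Der σ) + Σ_{j=1}^k (i_j − j)` over the (1-based) fixed points
`i_1 < ⋯ < i_k`; with 0-based fixed positions this is `Σ f − k(k−1)/2`. -/
def maf (σ : CP ℓ n) : ℕ := maj (Der σ) + ((∑ i ∈ fixSet σ, (i : ℕ)) - (fix σ).choose 2)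

/-- flag maf. -/
def fmaf (σ : CP ℓ n) : ℕ := ℓ * maf σ + col σ

end CP

/-- The q-integer `[k]_q = 1 + q + ⋯ + q^{k-1}`. -/
def qint {R : Type*} [CommSemiring R] (q : R) (k : ℕ) : R := ∑ i ∈ range k, q ^ i

/-- The Gaussian binomial coefficient `[n choose k]_q` (a polynomial in `q`, evaluated at
`q : R`), defined by the q-Pascal recurrence `[n+1,k+1]_q = [n,k]_q + q^{k+1}·[n,k+1]_q`;
it equals `(q;q)_n / ((q;q)_k (q;q)_{n-k})`. -/
def qbinom {R : Type*} [CommSemiring R] (q : R) : ℕ → ℕ → R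
  | _, 0 => 1
  | 0, _ + 1 => 0
  | n + 1, k + 1 => qbinom q n k + q ^ (k + 1) * qbinom q n (k + 1)

/-- The displacement `Σ (i_j - j)` of a set `{i_0 < i_1 < ⋯}` of naturals from the initial segment
of the same size: the contribution of the fixed points to `maf`. By `choose_two_le_sum` the
subtraction does not truncate. -/
def displacement (T : Finset ℕ) : ℕ := ∑ i ∈ T, i - (#T).choose 2

lemma choose_two_le_sum (T : Finset ℕ) : (#T).choose 2 ≤ ∑ i ∈ T, i := by
  have h := sum_range_le_sum (s := T.map Nat.castEmbedding) (c := 0) (by simp)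
  rw [Nat.choose_two_right, ← sum_range_id]
  zify
  simpa using h

lemma displacement_range (n : ℕ) : displacement (range n) = 0 := by
  rw [displacement, card_range, sum_range_id, Nat.choose_two_right, Nat.sub_self]

lemma displacement_insert {T : Finset ℕ} {a : ℕ} (ha : a ∉ T) (hcard : #T ≤ a) :
    displacement (insert a T) = displacement T + (a - #T) := by
  have hle := choose_two_le_sum T
  rw [displacement, displacement, card_insert_of_notMem ha, sum_insert ha,
    Nat.choose_succ_succ' _ 1, Nat.choose_one_right]
  lia

lemma sum_powersetCard_succ_insert {α M : Type*} [DecidableEq α] [AddCommMonoid M] {a : α}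
    {s : Finset α} (ha : a ∉ s) (m : ℕ) (g : Finset α → M) :
    ∑ T ∈ powersetCard (m + 1) (insert a s), g T =
      ∑ T ∈ powersetCard (m + 1) s, g T + ∑ T ∈ powersetCard m s, g (insert a T) := by
  have hmem : ∀ {j}, ∀ T ∈ powersetCard j s, a ∉ T := fun T hT h =>
    ha ((mem_powersetCard.1 hT).1 h)
  rw [powersetCard_succ_insert ha, sum_union, sum_image]
  · exact fun S hS T hT h => by rw [← erase_insert (hmem S hS), h, erase_insert (hmem T hT)]
  · refine disjoint_left.2 fun S hS hS' => ?_
    obtain ⟨T, -, rfl⟩ := mem_image.1 hS'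
    exact hmem _ hS (mem_insert_self a T)

section qbinom

variable {R : Type*} [CommSemiring R] (q : R)

lemma qbinom_zero_right (n : ℕ) : qbinom q n 0 = 1 := by
  cases n <;> rfl

lemma qbinom_eq_zero_of_lt {n k : ℕ} (h : n < k) : qbinom q n k = 0 := by
  induction n generalizing k with
  | zero => obtain ⟨k, rfl⟩ := Nat.exists_eq_succ_of_ne_zero h.ne'; rfl
  | succ n ih =>
    obtain ⟨k, rfl⟩ := Nat.exists_eq_succ_of_ne_zero (Nat.ne_zero_of_lt h)
    rw [qbinom, ih (by lia), ih (by lia), mul_zero, add_zero]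

lemma qbinom_self (n : ℕ) : qbinom q n n = 1 := by
  induction n with
  | zero => rfl
  | succ n ih => rw [qbinom, ih, qbinom_eq_zero_of_lt q n.lt_succ_self, mul_zero, add_zero]

-- Splitting the sets according to whether they contain the largest element gives the `q`-Pascal
-- recurrence: that element is displaced by exactly the number of omitted elements.
lemma sum_pow_displacement (m k : ℕ) :
    ∑ T ∈ powersetCard m (range (m + k)), q ^ displacement T = qbinom q (m + k) k := by
  induction m generalizing k with
  | zero => simp [qbinom_self, displacement]
  | succ m ihm =>
    induction k with
    | zero =>
      have h : powersetCard (m + 1) (range (m + 1)) = {range (m + 1)} := by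
        simpa using powersetCard_self (range (m + 1))
      rw [add_zero, h, sum_singleton, displacement_range, pow_zero, qbinom_zero_right]
    | succ k ihk =>
      have hinsert : ∀ T ∈ powersetCard m (range (m + (k + 1))),
          q ^ displacement (insert (m + (k + 1)) T) = q ^ (k + 1) * q ^ displacement T := by
        intro T hT
        obtain ⟨hTsub, hTcard⟩ := mem_powersetCard.1 hT
        rw [displacement_insert (fun h => notMem_range_self (hTsub h)) (by lia), hTcard,
          Nat.add_sub_cancel_left, pow_add, mul_comm]
      rw [show m + 1 + (k + 1) = m + (k + 1) + 1 by lia, range_add_one,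
        sum_powersetCard_succ_insert notMem_range_self,
        sum_congr rfl hinsert, ← mul_sum, ihm, qbinom, show m + (k + 1) = m + 1 + k by lia, ihk]

lemma sum_pow_displacement_map_val {n k : ℕ} (hk : k ≤ n) :
    ∑ T ∈ powersetCard (n - k) (univ : Finset (Fin n)), q ^ displacement (T.map Fin.valEmbedding) =
      qbinom q n k := by
  obtain ⟨m, rfl⟩ := Nat.exists_eq_add_of_le' hk
  rw [← sum_pow_displacement, ← Nat.Iio_eq_range, ← Fin.map_valEmbedding_univ, powersetCard_map,
    sum_map, Nat.add_sub_cancel]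
  rfl

end qbinom

namespace CP

variable {ℓ n k : ℕ}

section extend

variable [NeZero ℓ]

/-- The colored permutation acting on the image of `f` as `π` does and fixing every other letter,
with color `0`. For increasing `f` this inserts fixed points into the word of `π`, leaving `π` at
the positions `f 0 < f 1 < ⋯`. -/
noncomputable def extend (f : Fin k ↪ Fin n) (π : CP ℓ k) : CP ℓ n :=
  (π.1.viaEmbedding f, Function.extend f π.2 fun _ => 0)

variable (f : Fin k ↪ Fin n) (π : CP ℓ k)

lemma extend_fst_apply (j : Fin k) : (extend f π).1 (f j) = f (π.1 j) :=
  π.1.viaEmbedding_apply f j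

lemma extend_snd_apply (j : Fin k) : (extend f π).2 (f j) = π.2 j :=
  f.injective.extend_apply π.2 (fun _ => 0) j

lemma extend_fst_of_notMem_range {i : Fin n} (hi : i ∉ Set.range f) : (extend f π).1 i = i :=
  π.1.viaEmbedding_apply_of_notMem f i hi

lemma extend_snd_of_notMem_range {i : Fin n} (hi : i ∉ Set.range f) : (extend f π).2 i = 0 :=
  Function.extend_apply' π.2 (fun _ => 0) i hi

lemma extend_injective : Function.Injective (extend (ℓ := ℓ) f) := by
  intro π π' h
  refine Prod.ext (Equiv.ext fun j => f.injective ?_) (funext fun j => ?_)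
  · rw [← extend_fst_apply, ← extend_fst_apply, h]
  · rw [← extend_snd_apply f, ← extend_snd_apply f, h]

lemma col_extend : col (extend f π) = col π :=
  (Fintype.sum_of_injective f f.injective _ _
    (fun i hi => by simp [extend_snd_of_notMem_range f π hi])
    (fun j => by rw [extend_snd_apply])).symm

lemma mem_fixSet {σ : CP ℓ n} {i : Fin n} : i ∈ fixSet σ ↔ σ.1 i = i ∧ σ.2 i = 0 := by
  simp [fixSet]

lemma compl_fixSet_extend : (fixSet (extend f π))ᶜ = (fixSet π)ᶜ.map f := by
  ext i
  by_cases hi : i ∈ Set.range f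
  · obtain ⟨j, rfl⟩ := hi
    simp [mem_fixSet, extend_fst_apply, extend_snd_apply]
  · have hi' : ∀ j, f j ≠ i := by simpa using hi
    simp [mem_fixSet, extend_fst_of_notMem_range f π hi, extend_snd_of_notMem_range f π hi, hi']

end extend

/-- The increasing enumeration of the positions not fixed by `σ`. -/
def nonfixEmb (σ : CP ℓ n) : Fin (n - fix σ) ↪o Fin n :=
  (fixSet σ)ᶜ.orderEmbOfFin (card_nonfix σ)

lemma image_compl_fixSet (σ : CP ℓ n) : (fixSet σ)ᶜ.image σ.1 = (fixSet σ)ᶜ := by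
  refine eq_of_subset_of_card_le (fun v hv => ?_) (card_image_of_injective _ σ.1.injective).ge
  obtain ⟨i, hi, rfl⟩ := mem_image.1 hv
  refine mem_compl.2 fun hfix => mem_compl.1 hi ?_
  rwa [σ.1.injective (mem_filter.1 hfix).2.1] at hfix

lemma nonfixEmb_Der_apply (σ : CP ℓ n) (j : Fin (n - fix σ)) :
    nonfixEmb σ ((Der σ).1 j) = σ.1 (nonfixEmb σ j) := by
  have hemb : nonfixEmb σ = ((fixSet σ)ᶜ.image σ.1).orderEmbOfFin (card_vals σ) :=
    orderEmbOfFin_unique' _ fun j => by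
      rw [image_compl_fixSet]
      exact orderEmbOfFin_mem _ _ j
  exact (DFunLike.congr_fun hemb _).trans <| congrArg Subtype.val <|
    (((fixSet σ)ᶜ.image σ.1).orderIsoOfFin (card_vals σ)).apply_symm_apply
      (derMid σ ((fixSet σ)ᶜ.orderIsoOfFin (card_nonfix σ) j))

lemma range_nonfixEmb (σ : CP ℓ n) : Set.range (nonfixEmb σ) = ((fixSet σ)ᶜ : Finset (Fin n)) :=
  range_orderEmbOfFin _ _

lemma maf_eq (σ : CP ℓ n) :
    maf σ = maj (Der σ) + displacement ((fixSet σ).map Fin.valEmbedding) := by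
  simp [maf, displacement, fix]

section Der

variable [NeZero ℓ]

lemma extend_nonfixEmb_Der (σ : CP ℓ n) : extend (nonfixEmb σ).toEmbedding (Der σ) = σ := by
  have hout : ∀ i ∉ Set.range (nonfixEmb σ), σ.1 i = i ∧ σ.2 i = 0 := fun i hi => by
    simpa [range_nonfixEmb, mem_fixSet] using hi
  refine Prod.ext (Equiv.ext fun i => ?_) (funext fun i => ?_) <;>
    by_cases hi : i ∈ Set.range (nonfixEmb σ)
  · obtain ⟨j, rfl⟩ := hi
    exact (extend_fst_apply _ _ j).trans (nonfixEmb_Der_apply σ j)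
  · rw [extend_fst_of_notMem_range _ _ hi, (hout i hi).1]
  · obtain ⟨j, rfl⟩ := hi
    exact extend_snd_apply _ _ j
  · rw [extend_snd_of_notMem_range _ _ hi, (hout i hi).2]

lemma fix_Der (σ : CP ℓ n) : fix (Der σ) = 0 := by
  have h := congrArg card (compl_fixSet_extend (nonfixEmb σ).toEmbedding (Der σ))
  rw [extend_nonfixEmb_Der, card_map, card_nonfix, card_nonfix] at h
  have hle : fix (Der σ) ≤ n - fix σ := (card_le_univ _).trans_eq (Fintype.card_fin _)
  lia

lemma compl_fixSet_extend_of_fix_eq_zero (f : Fin k ↪ Fin n) {π : CP ℓ k} (hπ : fix π = 0) :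
    (fixSet (extend f π))ᶜ = univ.map f := by
  rw [compl_fixSet_extend, card_eq_zero.1 hπ, compl_empty]

-- Generalizing over `σ` makes `k` a free variable, so that it can be replaced by `n - fix σ`.
lemma maj_Der_of_extend_eq (f : Fin k ↪o Fin n) {π : CP ℓ k} (hπ : fix π = 0) {σ : CP ℓ n}
    (h : extend f.toEmbedding π = σ) : maj (Der σ) = maj π := by
  have hcompl : (fixSet σ)ᶜ = univ.map f.toEmbedding := by
    rw [← h, compl_fixSet_extend_of_fix_eq_zero _ hπ]
  obtain rfl : k = n - fix σ := by rw [← card_nonfix, hcompl, card_map, card_fin]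
  obtain rfl : f = nonfixEmb σ :=
    orderEmbOfFin_unique' _ fun j => hcompl ▸ mem_map_of_mem _ (mem_univ j)
  rw [extend_injective _ ((extend_nonfixEmb_Der σ).trans h.symm)]

lemma fmaf_extend (f : Fin k ↪o Fin n) {π : CP ℓ k} (hπ : fix π = 0) :
    fmaf (extend f.toEmbedding π) =
      ℓ * displacement ((univ.map f.toEmbedding)ᶜ.map Fin.valEmbedding) + fmaj π := by
  rw [fmaf, maf_eq, maj_Der_of_extend_eq f hπ rfl, col_extend,
    ← compl_fixSet_extend_of_fix_eq_zero _ hπ, compl_compl, fmaj]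
  ring

lemma sum_filter_fixSet_eq {R : Type*} [CommSemiring R] (q x : R) (T : Finset (Fin n))
    (hT : #Tᶜ = k) :
    ∑ σ : CP ℓ n with fixSet σ = T, q ^ fmaf σ * x ^ fix σ =
      x ^ #T * (q ^ ℓ) ^ displacement (T.map Fin.valEmbedding) *
        ∑ π : CP ℓ k with fix π = 0, q ^ fmaj π := by
  let f := Tᶜ.orderEmbOfFin hT
  have hf : univ.map f.toEmbedding = Tᶜ := map_orderEmbOfFin_univ _ _
  have hfixSet : ∀ π : CP ℓ k, fix π = 0 → fixSet (extend f.toEmbedding π) = T := fun π hπ => by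
    rw [← compl_inj_iff, compl_fixSet_extend_of_fix_eq_zero _ hπ, hf]
  rw [mul_sum]
  symm
  refine sum_bij (fun π _ => extend f.toEmbedding π) (fun π hπ => ?_)
    (fun _ _ _ _ h => extend_injective _ h) (fun σ hσ => ?_) (fun π hmem => ?_)
  · simpa using hfixSet π (mem_filter.1 hπ).2
  · obtain rfl : fixSet σ = T := (mem_filter.1 hσ).2
    obtain rfl : n - fix σ = k := (card_nonfix σ).symm.trans hT
    exact ⟨Der σ, by simpa using fix_Der σ, extend_nonfixEmb_Der σ⟩
  · have hπ : fix π = 0 := (mem_filter.1 hmem).2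
    rw [fmaf_extend f hπ, hf, compl_compl, fix, hfixSet π hπ]
    ring

end Der

end CP

theorem fmaf_fix_generating_function_via_derangements_general {R : Type*} [CommSemiring R]
    (q x : R) (ℓ n : ℕ) (hℓ : 1 ≤ ℓ) :
    ∑ σ : CP ℓ n, q ^ CP.fmaf σ * x ^ CP.fix σ =
      ∑ k ∈ range (n + 1), x ^ (n - k) * qbinom (q ^ ℓ) n k *
        ∑ π : CP ℓ k with CP.fix π = 0, q ^ CP.fmaj π := by
  have : NeZero ℓ := ⟨Nat.one_le_iff_ne_zero.1 hℓ⟩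
  let d (k : ℕ) : R := ∑ π : CP ℓ k with CP.fix π = 0, q ^ CP.fmaj π
  calc
    _ = ∑ T : Finset (Fin n), ∑ σ : CP ℓ n with CP.fixSet σ = T, q ^ CP.fmaf σ * x ^ CP.fix σ :=
      (sum_fiberwise univ CP.fixSet _).symm
    _ = ∑ k ∈ range (n + 1), ∑ T ∈ powersetCard (n - k) (univ : Finset (Fin n)),
          ∑ σ : CP ℓ n with CP.fixSet σ = T, q ^ CP.fmaf σ * x ^ CP.fix σ := by
      rw [← powerset_univ, sum_powerset, card_fin, ← sum_flip]
    _ = ∑ k ∈ range (n + 1), ∑ T ∈ powersetCard (n - k) (univ : Finset (Fin n)),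
          x ^ (n - k) * (q ^ ℓ) ^ displacement (T.map Fin.valEmbedding) * d k := by
      refine sum_congr rfl fun k hmem => sum_congr rfl fun T hT => ?_
      have hcard : #T = n - k := (mem_powersetCard.1 hT).2
      have hk : k ≤ n := mem_range_succ_iff.1 hmem
      rw [CP.sum_filter_fixSet_eq q x T (k := k) (by simp [card_compl]; lia), hcard]
    _ = _ := by
      refine sum_congr rfl fun k hk => ?_
      rw [← sum_mul, ← mul_sum, sum_pow_displacement_map_val _ (mem_range_succ_iff.1 hk)]

open MvPolynomial in
/-- `Σ_{σ ∈ G_{ℓ,n}} q^{fmaf σ} x^{fix σ}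
  = Σ_{k=0}^n x^{n−k} [n choose k]_{q^ℓ} d_{ℓ,k}(q)`. -/
theorem fmaf_fix_generating_function_via_derangements (ℓ n : ℕ) (hℓ : 1 ≤ ℓ) :
    (∑ σ : CP ℓ n,
        (X 0 : MvPolynomial (Fin 2) ℤ) ^ CP.fmaf σ * (X 1) ^ CP.fix σ) =
    ∑ k ∈ range (n + 1),
      (X 1 : MvPolynomial (Fin 2) ℤ) ^ (n - k) * qbinom ((X 0 : MvPolynomial (Fin 2) ℤ) ^ ℓ) n k *
        ∑ π ∈ (univ : Finset (CP ℓ k)).filter fun π => CP.fix π = 0,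
          (X 0 : MvPolynomial (Fin 2) ℤ) ^ CP.fmaj π := by
  exact fmaf_fix_generating_function_via_derangements_general (X 0) (X 1) ℓ n hℓ
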